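/- Suppose M is a countable structure, cl is a nontrivial disjointifying invariant closure operation on M, and ā is a finite tuple from M with cl(ā) ≠ M. Let N = M(ā) be the expansion of M by constants for ā, and define cl′(A) := cl(A ∪ ā) for all A ⊆ M. Then cl′ is a nontrivial disjointifying invariant closure operation on N. -/

import Mathlib

open FirstOrder Language

universe u v w

namespace Cl

variable (L : FirstOrder.Language.{u, v}) (M : Type w) [L.Structure M]

/-- The independence relation associated to a closure operation. -/
def IndepRel (cl : Set M → Set M) (A C B : Set M) : Prop :=
  A ∩ cl (B ∪ C) ⊆ cl C ∧ B ∩ cl (A ∪ C) ⊆ cl C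

/-- `cl` is an invariant closure operation: extensive, monotone, idempotent, and
commuting with every automorphism of `M`. -/
def IsInvariantClosure (cl : Set M → Set M) : Prop :=
  (∀ A : Set M, A ⊆ cl A) ∧
  (∀ A B : Set M, A ⊆ B → cl A ⊆ cl B) ∧
  (∀ A : Set M, cl (cl A) = cl A) ∧
  (∀ (σ : M ≃[L] M) (A : Set M), cl (⇑σ '' A) = ⇑σ '' cl A)

/-- `cl` is disjointifying: for all finite sets `A, B ⊇ C` there is a conjugate `A' ≅_C A`
of `A` over `C` with `A' ⫫_C B`. -/
def Disjointifying (cl : Set M → Set M) : Prop :=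
  ∀ A B C : Set M, A.Finite → B.Finite → C ⊆ A → C ⊆ B →
    ∃ σ : M ≃[L] M, (∀ x ∈ C, σ x = x) ∧ IndepRel M cl (⇑σ '' A) C B

/-- The expansion `M(c̄)` of `M` by (finitely many) constants. -/
def withConsts {n : ℕ} (c : Fin n → M) : (L[[Fin n]]).Structure M :=
  letI : (constantsOn (Fin n)).Structure M := constantsOn.structure c
  inferInstance

end Cl

open Cl

theorem withConsts_con {L : FirstOrder.Language.{u, v}} {M : Type w} [L.Structure M]
    {n : ℕ} (c : Fin n → M) (i : Fin n) (x : Fin 0 → M) :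
    (withConsts L M c).funMap (Sum.inr (show (constantsOn (Fin n)).Functions 0 from i)) x = c i :=
  rfl

/-- The reduct of an automorphism of `M(c)`. -/
def reductEquiv {L : FirstOrder.Language.{u, v}} {M : Type w} [L.Structure M]
    {n : ℕ} (c : Fin n → M)
    (σ : @FirstOrder.Language.Equiv (L[[Fin n]]) M M (withConsts L M c) (withConsts L M c)) :
    M ≃[L] M :=
  letI := withConsts L M c
  { toEquiv := σ.toEquiv
    map_fun' := fun {k} f x => σ.map_fun' (n := k) (Sum.inl f) x
    map_rel' := fun {k} r x => σ.map_rel' (n := k) (Sum.inl r) x }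

theorem fixes_consts {L : FirstOrder.Language.{u, v}} {M : Type w} [L.Structure M]
    {n : ℕ} (c : Fin n → M)
    (σ : @FirstOrder.Language.Equiv (L[[Fin n]]) M M (withConsts L M c) (withConsts L M c))
    (i : Fin n) : reductEquiv c σ (c i) = c i :=
  letI := withConsts L M c
  σ.map_fun' (n := 0) (Sum.inr (show (constantsOn (Fin n)).Functions 0 from i)) Fin.elim0

/-- An automorphism of `M` fixing `c` is an automorphism of `M(c)`. -/
def expandEquiv {L : FirstOrder.Language.{u, v}} {M : Type w} [L.Structure M]
    {n : ℕ} (c : Fin n → M) (σ : M ≃[L] M) (h : ∀ i, σ (c i) = c i) :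
    @FirstOrder.Language.Equiv (L[[Fin n]]) M M (withConsts L M c) (withConsts L M c) :=
  letI := withConsts L M c
  { toEquiv := σ.toEquiv
    map_fun' := fun {k} f x => by
      rcases f with f | f
      · exact σ.map_fun' f x
      · match k, f with
        | 0, i => exact h i
        | k + 1, f => exact f.elim
    map_rel' := fun {k} r x => by
      rcases r with r | r
      · exact σ.map_rel' r x
      · exact isEmptyElim r }

/-- If `cl` is a nontrivial disjointifying invariant closure operation on a countable
structure `M`, and `ā` is a tuple with `cl(ā) ≠ M`, then `cl'(A) := cl(A ∪ ā)` is a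
nontrivial disjointifying invariant closure operation on the expansion `M(ā)`. -/
theorem closure_withConstants {L : FirstOrder.Language.{u, v}} {M : Type w} [L.Structure M]
    [Countable M] (cl : Set M → Set M)
    (hinv : IsInvariantClosure L M cl) (hdisj : Disjointifying L M cl)
    (hnt : cl ∅ ≠ Set.univ)
    {n : ℕ} (c : Fin n → M) (hc : cl (Set.range c) ≠ Set.univ) :
    @IsInvariantClosure (L[[Fin n]]) M (withConsts L M c)
        (fun A => cl (A ∪ Set.range c)) ∧
      @Disjointifying (L[[Fin n]]) M (withConsts L M c)
        (fun A => cl (A ∪ Set.range c)) ∧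
      cl (∅ ∪ Set.range c) ≠ Set.univ := by
  obtain ⟨h1, h2, h3, h4⟩ := hinv
  refine ⟨⟨?_, ?_, ?_, ?_⟩, ?_, ?_⟩
  · exact fun A => Set.subset_union_left.trans (h1 _)
  · exact fun A B h => h2 _ _ (Set.union_subset_union_left _ h)
  · intro A
    change cl (cl (A ∪ Set.range c) ∪ Set.range c) = cl (A ∪ Set.range c)
    rw [Set.union_eq_self_of_subset_right (Set.subset_union_right.trans (h1 _)), h3]
  · intro σ A
    have hσ : (reductEquiv c σ) '' Set.range c = Set.range c := by
      rw [← Set.range_comp]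
      congr 1
      funext i
      exact fixes_consts c σ i
    have := h4 (reductEquiv c σ) (A ∪ Set.range c)
    rw [Set.image_union, hσ] at this
    exact this
  · intro A B C hA hB hCA hCB
    have hf := Set.finite_range c
    obtain ⟨σ, hfix, hi1, hi2⟩ := hdisj (A ∪ Set.range c) (B ∪ Set.range c) (C ∪ Set.range c)
      (hA.union hf) (hB.union hf) (Set.union_subset_union_left _ hCA)
      (Set.union_subset_union_left _ hCB)
    refine ⟨expandEquiv c σ fun i => hfix _ (Or.inr ⟨i, rfl⟩),
      fun x hx => hfix x (Or.inl hx), ?_, ?_⟩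
    · rintro x ⟨hx, hx'⟩
      refine hi1 ⟨Set.image_mono Set.subset_union_left hx, h2 _ _ ?_ hx'⟩
      rintro y ((hy | hy) | hy)
      · exact Or.inl (Or.inl hy)
      · exact Or.inr (Or.inl hy)
      · exact Or.inr (Or.inr hy)
    · rintro x ⟨hx, hx'⟩
      refine hi2 ⟨Or.inl hx, h2 _ _ ?_ hx'⟩
      rintro y ((hy | hy) | hy)
      · exact Or.inl (Set.image_mono Set.subset_union_left hy)
      · exact Or.inr (Or.inl hy)
      · exact Or.inr (Or.inr hy)
  · rwa [Set.empty_union]
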